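/- Let (S,d) be a geodesic δ-hyperbolic metric space with basepoint e and let x,y be two distinct points of the Gromov boundary ∂S. Then for every R > 0 there exists K > 0 such that for every u₁,u₂ ∈ U_K(x), every v₁,v₂ ∈ U_K(y), and all geodesic segments [u₁,u₂] and [v₁,v₂], one has d([u₁,u₂],[v₁,v₂]) > R. -/

import Mathlib

/-! In a geodesic space with slim triangles, the distance from `e` to a segment `[u, v]` is
`(u·v)_e` up to `2δ`, and `[u, v]` is within `δ` of `[u, w] ∪ [w, v]`. This gives the four-point
inequality `(u·v) ≥ min (u·w) (w·v) - 3δ`; put `c = 3δ`.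

A point `a` of a segment with endpoints `u₁, u₂ ∈ U_K(x)` satisfies `(a·u₁) ≥ (u₁·u₂) ≥ K - c`,
hence `a ∈ U_{K-2c}(x)`. If `x ≠ y` are represented by `s` and `t`, then `(sₙ·tₙ)` is below some
fixed `M` for infinitely many `n`; going from `sₙ` to `tₙ` through `a ∈ U_L(x)` and `b ∈ U_L(y)`,
this forces `(a·b) < M + 2c` once `L ≥ M + 2c`. As `a` and `b` are at distance more than `L` from
`e`, the distance `d(a, b) = d(a, e) + d(b, e) - 2(a·b)` grows without bound with `L`. -/

/-- A geodesic segment from `u` to `v`: the image of an isometric embedding of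
`[0, dist u v]` sending the endpoints to `u` and `v`. -/
def IsGeodesicSegment {S : Type*} [MetricSpace S] (Γ : Set S) (u v : S) : Prop :=
  ∃ γ : ℝ → S, γ 0 = u ∧ γ (dist u v) = v ∧
    (∀ s ∈ Set.Icc (0 : ℝ) (dist u v), ∀ t ∈ Set.Icc (0 : ℝ) (dist u v),
      dist (γ s) (γ t) = |s - t|) ∧
    Γ = γ '' Set.Icc (0 : ℝ) (dist u v)

/-- A geodesic metric space: every pair of points is joined by a geodesic segment. -/
def GeodesicSpace (S : Type*) [MetricSpace S] : Prop :=
  ∀ u v : S, ∃ Γ : Set S, IsGeodesicSegment Γ u v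

/-- `δ`-hyperbolicity: every geodesic triangle is `δ`-slim. -/
def DeltaHyperbolic (S : Type*) [MetricSpace S] (δ : ℝ) : Prop :=
  ∀ x y z : S, ∀ Γ₁ Γ₂ Γ₃ : Set S,
    IsGeodesicSegment Γ₁ x y → IsGeodesicSegment Γ₂ y z → IsGeodesicSegment Γ₃ z x →
    ∀ p ∈ Γ₁, Metric.infDist p (Γ₂ ∪ Γ₃) ≤ δ

/-- The Gromov product of `x` and `y` with respect to the basepoint `e`. -/
noncomputable def gprod {S : Type*} [MetricSpace S] (e x y : S) : ℝ :=
  (dist x e + dist y e - dist x y) / 2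

/-- A sequence converges to infinity if its pairwise Gromov products tend to infinity. -/
def ConvToInfty {S : Type*} [MetricSpace S] (e : S) (s : ℕ → S) : Prop :=
  Filter.Tendsto (fun p : ℕ × ℕ => gprod e (s p.1) (s p.2)) Filter.atTop Filter.atTop

/-- The type of sequences in `S` converging to infinity. -/
def BSeq (S : Type*) [MetricSpace S] (e : S) := {s : ℕ → S // ConvToInfty e s}

/-- Two sequences converging to infinity are equivalent if their mutual Gromov
products tend to infinity. -/
def bequiv {S : Type*} [MetricSpace S] (e : S) (s t : BSeq S e) : Prop :=
  Filter.Tendsto (fun n => gprod e (s.1 n) (t.1 n)) Filter.atTop Filter.atTop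

/-- The Gromov boundary of `S` with respect to the basepoint `e`. -/
def GBoundary (S : Type*) [MetricSpace S] (e : S) := Quot (bequiv (S := S) e)

/-- A sequence in `S` tends to the boundary point `x`. -/
def TendstoBd {S : Type*} [MetricSpace S] (e : S) (s : ℕ → S) (x : GBoundary S e) : Prop :=
  ∃ h : ConvToInfty e s, Quot.mk _ (⟨s, h⟩ : BSeq S e) = x

/-- The Gromov product of a point `u ∈ S` with a boundary point `x`:
the infimum over sequences tending to `x` of the liminf of Gromov products. -/
noncomputable def gprodSB {S : Type*} [MetricSpace S] (e u : S) (x : GBoundary S e) : EReal :=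
  sInf {r : EReal | ∃ s : ℕ → S, TendstoBd e s x ∧
    r = Filter.liminf (fun n => (gprod e u (s n) : EReal)) Filter.atTop}

/-- The Gromov product of two boundary points. -/
noncomputable def gprodBB {S : Type*} [MetricSpace S] (e : S) (x y : GBoundary S e) : EReal :=
  sInf {r : EReal | ∃ s t : ℕ → S, TendstoBd e s x ∧ TendstoBd e t y ∧
    r = Filter.liminf (fun p : ℕ × ℕ => (gprod e (s p.1) (t p.2) : EReal)) Filter.atTop}

/-- `UK e K x = {s ∈ S | (x·s)_e > K}`. -/
def UK {S : Type*} [MetricSpace S] (e : S) (K : ℝ) (x : GBoundary S e) : Set S :=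
  {u : S | (K : EReal) < gprodSB e u x}

/-- `d'(x,y) = exp (−ζ (x·y)_e)` on the boundary (equal to `0` when the product is `∞`). -/
noncomputable def dExp {S : Type*} [MetricSpace S] (e : S) (ζ : ℝ) (x y : GBoundary S e) : ℝ :=
  if gprodBB e x y = ⊤ then 0 else Real.exp (-ζ * (gprodBB e x y).toReal)

/-- The chain metric `ρ(x,y) = inf Σ d'(s_k, s_{k+1})` over finite chains from `x` to `y`. -/
noncomputable def rhoChain {S : Type*} [MetricSpace S] (e : S) (ζ : ℝ)
    (x y : GBoundary S e) : ℝ :=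
  sInf {r : ℝ | ∃ (n : ℕ) (c : ℕ → GBoundary S e), c 0 = x ∧ c n = y ∧
    r = ∑ k ∈ Finset.range n, dExp e ζ (c k) (c (k + 1))}

/-- `ρ` is a metric. -/
def IsMetricFn {B : Type*} (ρ : B → B → ℝ) : Prop :=
  (∀ x y, 0 ≤ ρ x y) ∧ (∀ x y, ρ x y = 0 ↔ x = y) ∧ (∀ x y, ρ x y = ρ y x) ∧
  ∀ x y z, ρ x z ≤ ρ x y + ρ y z

/-- `ζ` is a suitable visual parameter: `ζ > 0`, the associated chain function `ρ` is a
metric on the boundary, and `d'/2 ≤ ρ ≤ d'`. -/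
def VisualParam {S : Type*} [MetricSpace S] (e : S) (ζ : ℝ) : Prop :=
  0 < ζ ∧ IsMetricFn (rhoChain e ζ) ∧
  ∀ x y : GBoundary S e, dExp e ζ x y / 2 ≤ rhoChain e ζ x y ∧ rhoChain e ζ x y ≤ dExp e ζ x y

/-- The topology on the Gromov boundary induced by the visual metric `ρ`. -/
noncomputable def bdTopology (S : Type*) [MetricSpace S] (e : S) (ζ : ℝ) :
    TopologicalSpace (GBoundary S e) :=
  TopologicalSpace.generateFrom
    {B | ∃ (x : GBoundary S e) (ε : ℝ), 0 < ε ∧ B = {y | rhoChain e ζ x y < ε}}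

open Filter Metric Set

theorem dist_add_dist_le_of_dist_le {X : Type*} [PseudoMetricSpace X] {v w p q : X} {r : ℝ}
    (h : dist v q + dist q w = dist v w) (hpq : dist p q ≤ r) :
    dist v p + dist p w ≤ dist v w + 2 * r := by
  have hv := dist_triangle_right v p q
  have hw := dist_triangle p q w
  linarith

theorem exists_dist_le_of_mem_cthickening {X : Type*} [PseudoMetricSpace X] {A : Set X}
    (hA : IsCompact A) {δ : ℝ} (hδ : 0 ≤ δ) {p : X} (hp : p ∈ cthickening δ A) :
    ∃ q ∈ A, dist p q ≤ δ := by
  simpa [hA.cthickening_eq_biUnion_closedBall hδ] using hp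

section GromovProduct

variable {S : Type*} [MetricSpace S]

theorem gprod_comm (e u v : S) : gprod e u v = gprod e v u := by
  simp only [gprod, dist_comm u v, add_comm]

theorem gprod_le_dist_left (e u v : S) : gprod e u v ≤ dist u e := by
  have huv := dist_triangle_left v e u
  unfold gprod
  linarith

theorem dist_eq_add_sub_two_mul_gprod (e u v : S) :
    dist u v = dist u e + dist v e - 2 * gprod e u v := by
  unfold gprod
  ring

theorem gprod_le_dist_of_dist_add_dist {u v a : S} (h : dist u a + dist a v = dist u v) (e : S) :
    gprod e u v ≤ dist a e := by
  have hu := dist_triangle u a e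
  have hv := dist_triangle_left v e a
  unfold gprod
  linarith

theorem gprod_le_gprod_of_dist_add_dist {u v a : S} (h : dist u a + dist a v = dist u v) (e : S) :
    gprod e u v ≤ gprod e a u := by
  have hv := dist_triangle_left v e a
  unfold gprod
  rw [dist_comm a u]
  linarith

end GromovProduct

namespace IsGeodesicSegment

variable {S : Type*} [MetricSpace S] {Γ : Set S} {u v : S}

theorem left_mem (h : IsGeodesicSegment Γ u v) : u ∈ Γ := by
  obtain ⟨γ, hu, -, -, rfl⟩ := h
  exact ⟨0, left_mem_Icc.2 dist_nonneg, hu⟩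

theorem right_mem (h : IsGeodesicSegment Γ u v) : v ∈ Γ := by
  obtain ⟨γ, -, hv, -, rfl⟩ := h
  exact ⟨dist u v, right_mem_Icc.2 dist_nonneg, hv⟩

theorem dist_add_dist (h : IsGeodesicSegment Γ u v) {a : S} (ha : a ∈ Γ) :
    dist u a + dist a v = dist u v := by
  obtain ⟨γ, hu, hv, hγ, rfl⟩ := h
  obtain ⟨t, ht, rfl⟩ := ha
  have hua : dist u (γ t) = t := by
    simpa [hu, abs_of_nonneg ht.1] using hγ 0 (left_mem_Icc.2 dist_nonneg) t ht
  have hav : dist (γ t) v = dist u v - t := by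
    simpa [hv, abs_sub_comm t, abs_of_nonneg (sub_nonneg.2 ht.2)] using
      hγ t ht _ (right_mem_Icc.2 dist_nonneg)
  rw [hua, hav, add_sub_cancel]

theorem exists_continuousOn_image_Icc (h : IsGeodesicSegment Γ u v) :
    ∃ γ : ℝ → S, ContinuousOn γ (Icc 0 (dist u v)) ∧ Γ = γ '' Icc 0 (dist u v) := by
  obtain ⟨γ, -, -, hγ, hΓ⟩ := h
  have hlip : LipschitzOnWith 1 γ (Icc 0 (dist u v)) :=
    LipschitzOnWith.of_dist_le_mul fun s hs t ht => by
      rw [hγ s hs t ht, Real.dist_eq, NNReal.coe_one, one_mul]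
  exact ⟨γ, hlip.continuousOn, hΓ⟩

theorem isCompact (h : IsGeodesicSegment Γ u v) : IsCompact Γ := by
  obtain ⟨γ, hγ, rfl⟩ := h.exists_continuousOn_image_Icc
  exact isCompact_Icc.image_of_continuousOn hγ

theorem isPreconnected (h : IsGeodesicSegment Γ u v) : IsPreconnected Γ := by
  obtain ⟨γ, hγ, rfl⟩ := h.exists_continuousOn_image_Icc
  exact isPreconnected_Icc.image γ hγ

end IsGeodesicSegment

/-- Gromov's four-point condition at the basepoint `e` with constant `c`. Unlike slimness of
triangles it makes sense without geodesics. -/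
def GromovHyperbolicAt {S : Type*} [MetricSpace S] (e : S) (c : ℝ) : Prop :=
  ∀ u v w : S, min (gprod e u v) (gprod e v w) - c ≤ gprod e u w

namespace DeltaHyperbolic

variable {S : Type*} [MetricSpace S] {δ : ℝ}

theorem subset_cthickening_union (hhyp : DeltaHyperbolic S δ) {x y z : S} {Γ₁ Γ₂ Γ₃ : Set S}
    (h₁ : IsGeodesicSegment Γ₁ x y) (h₂ : IsGeodesicSegment Γ₂ y z)
    (h₃ : IsGeodesicSegment Γ₃ z x) :
    Γ₁ ⊆ cthickening δ Γ₂ ∪ cthickening δ Γ₃ := by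
  intro p hp
  obtain ⟨q, hq, hpq⟩ :=
    (h₂.isCompact.union h₃.isCompact).exists_infDist_eq_dist ⟨y, .inl h₂.left_mem⟩ p
  rw [← cthickening_union]
  exact mem_cthickening_of_dist_le p q δ _ hq
    (hpq ▸ hhyp x y z Γ₁ Γ₂ Γ₃ h₁ h₂ h₃ p hp)

theorem exists_mem_dist_le_gprod_add (hhyp : DeltaHyperbolic S δ) (hδ : 0 ≤ δ)
    (hgeo : GeodesicSpace S) (e : S) {u v : S} {Γ : Set S} (h : IsGeodesicSegment Γ u v) :
    ∃ p ∈ Γ, dist p e ≤ gprod e u v + 2 * δ := by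
  obtain ⟨A, hA⟩ := hgeo v e
  obtain ⟨B, hB⟩ := hgeo e u
  -- The closed neighbourhoods of the other two sides cover the connected set `Γ` and both meet it,
  -- so some point of `Γ` lies in both.
  obtain ⟨p, hp, hpA, hpB⟩ := isPreconnected_closed_iff.1 h.isPreconnected _ _
    isClosed_cthickening isClosed_cthickening (hhyp.subset_cthickening_union h hA hB)
    ⟨v, h.right_mem, self_subset_cthickening _ hA.left_mem⟩
    ⟨u, h.left_mem, self_subset_cthickening _ hB.right_mem⟩
  obtain ⟨q, hq, hpq⟩ := exists_dist_le_of_mem_cthickening hA.isCompact hδ hpA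
  obtain ⟨r, hr, hpr⟩ := exists_dist_le_of_mem_cthickening hB.isCompact hδ hpB
  have hv : dist v p + dist p e ≤ dist v e + 2 * δ :=
    dist_add_dist_le_of_dist_le (hA.dist_add_dist hq) hpq
  have hu : dist e p + dist p u ≤ dist e u + 2 * δ :=
    dist_add_dist_le_of_dist_le (hB.dist_add_dist hr) hpr
  have huv := dist_triangle_left u v p
  refine ⟨p, hp, ?_⟩
  rw [dist_comm e p, dist_comm e u] at hu
  rw [dist_comm v p] at hv
  unfold gprod
  linarith

theorem gromovHyperbolicAt (hhyp : DeltaHyperbolic S δ) (hδ : 0 ≤ δ) (hgeo : GeodesicSpace S)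
    (e : S) : GromovHyperbolicAt e (3 * δ) := by
  intro u v w
  obtain ⟨Γ, hΓ⟩ := hgeo u w
  obtain ⟨A, hA⟩ := hgeo w v
  obtain ⟨B, hB⟩ := hgeo v u
  obtain ⟨p, hp, hpe⟩ := hhyp.exists_mem_dist_le_gprod_add hδ hgeo e hΓ
  obtain ⟨q, hmin, hpq⟩ : ∃ q, min (gprod e u v) (gprod e v w) ≤ dist q e ∧ dist p q ≤ δ := by
    rcases hhyp.subset_cthickening_union hΓ hA hB hp with hpA | hpB
    · obtain ⟨q, hq, hpq⟩ := exists_dist_le_of_mem_cthickening hA.isCompact hδ hpA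
      have hqe := gprod_le_dist_of_dist_add_dist (hA.dist_add_dist hq) e
      exact ⟨q, (min_le_right _ _).trans (gprod_comm e v w ▸ hqe), hpq⟩
    · obtain ⟨q, hq, hpq⟩ := exists_dist_le_of_mem_cthickening hB.isCompact hδ hpB
      have hqe := gprod_le_dist_of_dist_add_dist (hB.dist_add_dist hq) e
      exact ⟨q, (min_le_left _ _).trans (gprod_comm e u v ▸ hqe), hpq⟩
  have hqpe := dist_triangle_left q e p
  linarith

end DeltaHyperbolic

section Boundary

variable {S : Type*} [MetricSpace S] {e : S} {K : ℝ} {x y : GBoundary S e}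

theorem exists_tendstoBd (x : GBoundary S e) : ∃ s : ℕ → S, TendstoBd e s x := by
  obtain ⟨⟨s, hs⟩, rfl⟩ := Quot.exists_rep x
  exact ⟨s, hs, rfl⟩

theorem exists_frequently_gprod_lt_of_ne (hxy : x ≠ y) {s t : ℕ → S} (hs : TendstoBd e s x)
    (ht : TendstoBd e t y) : ∃ M, ∃ᶠ n in atTop, gprod e (s n) (t n) < M := by
  obtain ⟨hs', rfl⟩ := hs
  obtain ⟨ht', rfl⟩ := ht
  by_contra! h
  exact hxy (Quot.sound (tendsto_atTop.2 fun M => by simpa using h M))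

theorem UK_antitone (e : S) (x : GBoundary S e) : Antitone fun K => UK e K x :=
  fun _ _ hKL _ hu => (EReal.coe_le_coe_iff.2 hKL).trans_lt hu

theorem eventually_lt_gprod_of_mem_UK {u : S} (hu : u ∈ UK e K x) {s : ℕ → S}
    (hs : TendstoBd e s x) : ∀ᶠ n in atTop, K < gprod e u (s n) := by
  have hlim : (K : EReal) < liminf (fun n => (gprod e u (s n) : EReal)) atTop :=
    lt_of_lt_of_le hu (sInf_le ⟨s, hs, rfl⟩)
  exact (eventually_lt_of_lt_liminf hlim).mono fun _ => EReal.coe_lt_coe_iff.1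

theorem lt_dist_of_mem_UK {u : S} (hu : u ∈ UK e K x) : K < dist u e := by
  obtain ⟨s, hs⟩ := exists_tendstoBd x
  obtain ⟨n, hn⟩ := (eventually_lt_gprod_of_mem_UK hu hs).exists
  exact hn.trans_le (gprod_le_dist_left e u (s n))

theorem mem_UK_of_eventually_le {u : S} {L : ℝ} (hKL : K < L)
    (h : ∀ s, TendstoBd e s x → ∀ᶠ n in atTop, L ≤ gprod e u (s n)) : u ∈ UK e K x := by
  refine (EReal.coe_lt_coe_iff.2 hKL).trans_le (le_sInf ?_)
  rintro _ ⟨s, hs, rfl⟩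
  exact le_liminf_of_le isCobounded_ge_of_top
    ((h s hs).mono fun _ => EReal.coe_le_coe_iff.2)

theorem exists_gt_mem_UK_and_mem_UK {u v : S} (hu : u ∈ UK e K x) (hv : v ∈ UK e K x) :
    ∃ L > K, u ∈ UK e L x ∧ v ∈ UK e L x := by
  obtain ⟨L, hKL, hL⟩ := EReal.lt_iff_exists_real_btwn.1 (lt_min hu hv)
  exact ⟨L, EReal.coe_lt_coe_iff.1 hKL, lt_min_iff.1 hL⟩

end Boundary

namespace GromovHyperbolicAt

variable {S : Type*} [MetricSpace S] {e : S} {c : ℝ} {x y : GBoundary S e}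

theorem nonneg (h : GromovHyperbolicAt e c) : 0 ≤ c := by
  simpa using h e e e

theorem sub_le_gprod (h : GromovHyperbolicAt e c) {u v w : S} {r : ℝ} (huv : r ≤ gprod e u v)
    (hvw : r ≤ gprod e v w) : r - c ≤ gprod e u w :=
  (sub_le_sub_right (le_min huv hvw) c).trans (h u v w)

theorem mem_UK_of_dist_add_dist (h : GromovHyperbolicAt e c) {K : ℝ} {u v a : S}
    (hu : u ∈ UK e K x) (hv : v ∈ UK e K x) (ha : dist u a + dist a v = dist u v) :
    a ∈ UK e (K - 2 * c) x := by
  obtain ⟨L, hKL, huL, hvL⟩ := exists_gt_mem_UK_and_mem_UK hu hv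
  refine mem_UK_of_eventually_le (L := L - 2 * c) (by linarith) fun s hs => ?_
  filter_upwards [eventually_lt_gprod_of_mem_UK huL hs, eventually_lt_gprod_of_mem_UK hvL hs]
    with n hun hvn
  have huv : L - c ≤ gprod e u v := h.sub_le_gprod hun.le (gprod_comm e v (s n) ▸ hvn.le)
  have hau : L - c ≤ gprod e a u := huv.trans (gprod_le_gprod_of_dist_add_dist ha e)
  have has := h.sub_le_gprod hau (by linarith [h.nonneg] : L - c ≤ gprod e u (s n))
  linarith

theorem exists_gprod_lt_of_mem_UK (h : GromovHyperbolicAt e c) (hxy : x ≠ y) :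
    ∃ M, ∀ a ∈ UK e M x, ∀ b ∈ UK e M y, gprod e a b < M := by
  obtain ⟨s, hs⟩ := exists_tendstoBd x
  obtain ⟨t, ht⟩ := exists_tendstoBd y
  obtain ⟨M, hM⟩ := exists_frequently_gprod_lt_of_ne hxy hs ht
  refine ⟨M + 2 * c, fun a ha b hb => ?_⟩
  obtain ⟨n, hst, has, hbt⟩ := (hM.and_eventually
    ((eventually_lt_gprod_of_mem_UK ha hs).and (eventually_lt_gprod_of_mem_UK hb ht))).exists
  by_contra! hab
  have hsb := h.sub_le_gprod (gprod_comm e a (s n) ▸ has.le) hab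
  have hst_ge := h.sub_le_gprod hsb (by linarith [h.nonneg] : M + 2 * c - c ≤ gprod e b (t n))
  linarith

theorem exists_lt_dist_of_mem_UK (h : GromovHyperbolicAt e c) (hxy : x ≠ y) (R : ℝ) :
    ∃ L, ∀ a ∈ UK e L x, ∀ b ∈ UK e L y, R < dist a b := by
  obtain ⟨M, hM⟩ := h.exists_gprod_lt_of_mem_UK hxy
  have hML : M ≤ M + |R| := le_add_of_nonneg_right (abs_nonneg R)
  refine ⟨M + |R|, fun a ha b hb => ?_⟩
  have hab := hM a (UK_antitone e x hML ha) b (UK_antitone e y hML hb)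
  have hae := lt_dist_of_mem_UK ha
  have hbe := lt_dist_of_mem_UK hb
  rw [dist_eq_add_sub_two_mul_gprod e]
  linarith [le_abs_self R, abs_nonneg R]

end GromovHyperbolicAt

theorem statement16_general {S : Type*} [MetricSpace S] {e : S} {c : ℝ}
    (h : GromovHyperbolicAt e c) {x y : GBoundary S e} (hxy : x ≠ y) (R : ℝ) :
    ∃ K : ℝ, 0 < K ∧
      ∀ u₁ u₂ v₁ v₂ : S, u₁ ∈ UK e K x → u₂ ∈ UK e K x → v₁ ∈ UK e K y → v₂ ∈ UK e K y →
        ∀ a b : S, dist u₁ a + dist a u₂ = dist u₁ u₂ → dist v₁ b + dist b v₂ = dist v₁ v₂ →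
          R < dist a b := by
  obtain ⟨L, hL⟩ := h.exists_lt_dist_of_mem_UK hxy R
  let K := max 1 (L + 2 * c)
  have hLK : L ≤ K - 2 * c := le_sub_iff_add_le.2 (le_max_right _ _)
  refine ⟨K, zero_lt_one.trans_le (le_max_left _ _), ?_⟩
  intro u₁ u₂ v₁ v₂ hu₁ hu₂ hv₁ hv₂ a b ha hb
  exact hL a (UK_antitone e x hLK (h.mem_UK_of_dist_add_dist hu₁ hu₂ ha))
    b (UK_antitone e y hLK (h.mem_UK_of_dist_add_dist hv₁ hv₂ hb))

/-- For distinct boundary points `x ≠ y` and every `R > 0` there is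
`K > 0` such that geodesics between points of `U_K(x)` stay at distance `> R` from
geodesics between points of `U_K(y)`. -/
theorem statement16 {S : Type*} [MetricSpace S] (δ : ℝ) (hδ : 0 ≤ δ)
    (hgeo : GeodesicSpace S) (hhyp : DeltaHyperbolic S δ) (e : S)
    (x y : GBoundary S e) (hxy : x ≠ y) :
    ∀ R : ℝ, 0 < R → ∃ K : ℝ, 0 < K ∧
      ∀ u₁ u₂ v₁ v₂ : S, u₁ ∈ UK e K x → u₂ ∈ UK e K x → v₁ ∈ UK e K y → v₂ ∈ UK e K y →
        ∀ Γ Δ : Set S, IsGeodesicSegment Γ u₁ u₂ → IsGeodesicSegment Δ v₁ v₂ →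
          ∀ a ∈ Γ, ∀ b ∈ Δ, R < dist a b := by
  intro R _
  obtain ⟨K, hK, h⟩ := statement16_general (hhyp.gromovHyperbolicAt hδ hgeo e) hxy R
  exact ⟨K, hK, fun u₁ u₂ v₁ v₂ hu₁ hu₂ hv₁ hv₂ Γ Δ hΓ hΔ a ha b hb =>
    h u₁ u₂ v₁ v₂ hu₁ hu₂ hv₁ hv₂ a b (hΓ.dist_add_dist ha) (hΔ.dist_add_dist hb)⟩
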